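/- Let B → A be a ring homomorphism such that A is a projective left B-module and a faithfully flat right B-module (via this homomorphism). Let n be a natural number and suppose that every left B-module of finite projective dimension has projective dimension at most n. If M is a left B-module with pd_B M = n, then pd_B (A ⊗_B M) = n (as a left B-module by restriction of scalars) and pd_A (A ⊗_B M) = n. -/

import Mathlib

open CategoryTheory Limits

universe u

/-- The projective dimension of an object `M` of an abelian category, as an element of
`ℕ∞ = ℕ ∪ {∞}`: the least `n` such that `M` admits a projective resolution vanishing in
degrees `> n` (and `⊤` if there is no such finite resolution). -/
noncomputable def projDim {C : Type*} [Category C] [Abelian C] (M : C) : ℕ∞ :=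
  sInf {n : ℕ∞ | ∃ P : CategoryTheory.ProjectiveResolution M,
    ∀ i : ℕ, n < (i : ℕ∞) → Limits.IsZero (P.complex.X i)}

section
universe v w
variable {C : Type w} [Category.{v} C] [Abelian C] [EnoughProjectives C]

lemma projDim_le_iff_res (M : C) (n : ℕ) : projDim M ≤ n ↔
    ∃ P : ProjectiveResolution M, ∀ i : ℕ, n < i → IsZero (P.complex.X i) := by
  constructor
  · intro h
    have hne : {n : ℕ∞ | ∃ P : ProjectiveResolution M,
      ∀ i : ℕ, n < (i : ℕ∞) → IsZero (P.complex.X i)}.Nonempty :=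
      ⟨⊤, ProjectiveResolution.of M, fun i hi => absurd hi (by simp)⟩
    obtain ⟨P, hP⟩ := csInf_mem hne
    exact ⟨P, fun i hi => hP i (lt_of_le_of_lt h (by exact_mod_cast hi))⟩
  · rintro ⟨P, hP⟩
    exact sInf_le ⟨P, fun i hi => hP i (by exact_mod_cast hi)⟩

lemma hasPD_of_res (M : C) (n : ℕ) (P : ProjectiveResolution M)
    (hP : ∀ i : ℕ, n < i → IsZero (P.complex.X i)) : HasProjectiveDimensionLE M n := by
  let := HasExt.standard C
  rw [HasProjectiveDimensionLE, hasProjectiveDimensionLT_iff]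
  intro i hi Y e
  obtain ⟨f, hf, rfl⟩ := P.extMk_surjective e (i+1) rfl
  obtain rfl : f = 0 := (hP i hi).eq_of_src _ _
  simp

lemma exists_splice {S : ShortComplex C} (hS : S.ShortExact) (h2 : Projective S.X₂)
    (Q : ProjectiveResolution S.X₁) (n : ℕ) (hQ : ∀ i : ℕ, n < i → IsZero (Q.complex.X i)) :
    ∃ P : ProjectiveResolution S.X₃, ∀ i : ℕ, n + 1 < i → IsZero (P.complex.X i) := by
  have := hS.mono_f
  have := hS.epi_g
  have w0 : Q.complex.d 1 0 ≫ Q.π.f 0 = 0 := Q.complex_d_comp_π_f_zero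
  let p : Q.complex.X 0 ⟶ S.X₁ := Q.π.f 0
  have hp : Epi p := inferInstanceAs (Epi (Q.π.f 0))
  have w1 : Q.complex.d 1 0 ≫ p ≫ S.f = 0 := by
    rw [← Category.assoc]
    change (Q.complex.d 1 0 ≫ Q.π.f 0) ≫ S.f = 0
    rw [w0]; exact zero_comp
  have ex0 : (ShortComplex.mk (Q.complex.d 1 0) p w0).Exact := Q.exact₀
  let K := ChainComplex.augment Q.complex (p ≫ S.f) w1
  have w2 : K.d 1 0 ≫ S.g = 0 := by
    change (p ≫ S.f) ≫ S.g = 0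
    simp
  have exK : (ShortComplex.mk (K.d 1 0) S.g w2).Exact := by
    let α : ShortComplex.mk (K.d 1 0) S.g w2 ⟶ S := { τ₁ := p, τ₂ := 𝟙 _, τ₃ := 𝟙 _, comm₁₂ := (Category.comp_id _).symm, comm₂₃ := (Category.id_comp _).trans (Category.comp_id _).symm }
    have : Epi α.τ₁ := hp
    have : IsIso α.τ₂ := inferInstanceAs (IsIso (𝟙 _))
    have : Mono α.τ₃ := inferInstanceAs (Mono (𝟙 _))
    exact (ShortComplex.exact_iff_of_epi_of_isIso_of_mono α).2 hS.exact
  have exK1 : (ShortComplex.mk (Q.complex.d 1 0) (p ≫ S.f) w1).Exact := by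
    let α : ShortComplex.mk (Q.complex.d 1 0) p w0 ⟶ ShortComplex.mk (Q.complex.d 1 0) (p ≫ S.f) w1 := { τ₁ := 𝟙 _, τ₂ := 𝟙 _, τ₃ := S.f }
    have : Epi α.τ₁ := inferInstanceAs (Epi (𝟙 _))
    have : IsIso α.τ₂ := inferInstanceAs (IsIso (𝟙 _))
    have : Mono α.τ₃ := inferInstanceAs (Mono S.f)
    exact (ShortComplex.exact_iff_of_epi_of_isIso_of_mono α).1 ex0
  have hφ : ((ChainComplex.toSingle₀Equiv K S.X₃).symm ⟨S.g, w2⟩).f 0 = S.g :=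
    ChainComplex.toSingle₀Equiv_symm_apply_f_zero (C := K) (X := S.X₃) S.g w2
  refine ⟨{ complex := K
            projective := ?_
            π := (ChainComplex.toSingle₀Equiv K S.X₃).symm ⟨S.g, w2⟩
            quasiIso := ⟨fun m => ?_⟩ }, ?_⟩
  · rintro (_ | m)
    · exact h2
    · exact Q.projective m
  · cases m with
    | zero =>
      rw [ChainComplex.quasiIsoAt₀_iff, ShortComplex.quasiIso_iff_of_zeros']
      · refine (ShortComplex.exact_and_epi_g_iff_of_iso ?_).2 ⟨exK, hS.epi_g⟩
        exact ShortComplex.isoMk (Iso.refl _) (Iso.refl _) (Iso.refl _)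
          ((Category.id_comp _).trans (Category.comp_id _).symm)
          ((Category.id_comp _).trans (Eq.trans hφ.symm (Category.comp_id _).symm))
      all_goals rfl
    | succ m =>
      rw [quasiIsoAt_iff_exactAt']
      · rw [HomologicalComplex.exactAt_iff' _ (m + 2) (m + 1) m (by simp) (by simp)]
        match m with
        | 0 => exact exK1
        | m + 1 => exact Q.exact_succ m
      · apply ChainComplex.exactAt_succ_single_obj
  · rintro (_ | i) hi
    · simp at hi
    · exact hQ i (by omega)

lemma exists_res (n : ℕ) : ∀ (M : C), HasProjectiveDimensionLE M n →
    ∃ P : ProjectiveResolution M, ∀ i : ℕ, n < i → IsZero (P.complex.X i) := by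
  induction n with
  | zero =>
    intro M h
    have : Projective M := (projective_iff_hasProjectiveDimensionLE_zero M).2 h
    refine ⟨ProjectiveResolution.self M, fun i hi => ?_⟩
    apply HomologicalComplex.isZero_single_obj_X
    omega
  | succ n ih =>
    intro M h
    let S : ShortComplex C := ShortComplex.mk (kernel.ι (Projective.π M)) (Projective.π M) (by simp)
    have hS : S.ShortExact :=
      { exact := ShortComplex.exact_of_f_is_kernel _ (kernelIsKernel _)
        mono_f := inferInstanceAs (Mono (kernel.ι _))
        epi_g := inferInstanceAs (Epi (Projective.π M)) }
    have h2 : Projective S.X₂ := inferInstanceAs (Projective (Projective.over M))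
    obtain ⟨Q, hQ⟩ := ih S.X₁ ((hS.hasProjectiveDimensionLT_X₃_iff n h2).1 h)
    exact exists_splice hS h2 Q n hQ

lemma projDim_le_iff (M : C) (n : ℕ) : projDim M ≤ n ↔ HasProjectiveDimensionLE M n := by
  rw [projDim_le_iff_res]
  exact ⟨fun ⟨P, hP⟩ => hasPD_of_res M n P hP, exists_res n M⟩
end

lemma projDim_map_le {C D : Type*} [Category C] [Category D] [Abelian C] [Abelian D]
    (F : C ⥤ D) [F.Additive] [F.PreservesProjectiveObjects] [F.PreservesHomology] (M : C) :
    projDim (F.obj M) ≤ projDim M := by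
  refine sInf_le_sInf ?_
  rintro n ⟨P, hP⟩
  exact ⟨F.mapProjectiveResolution P, fun i hi => F.map_isZero (hP i hi)⟩

lemma restrict_preservesProj (B A : Type u) [Ring B] [Ring A] (f : B →+* A)
    (hAproj : Module.Projective B ((ModuleCat.restrictScalars f).obj (ModuleCat.of A A))) :
    (ModuleCat.restrictScalars.{u} f).PreservesProjectiveObjects where
  projective_obj {P} hP := by
    have : (ModuleCat.coextendScalars.{u, u, u} f).PreservesEpimorphisms := by
      refine ⟨fun {X Y} g hg => ?_⟩
      rw [ModuleCat.epi_iff_surjective] at hg ⊢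
      intro y
      obtain ⟨h, hh⟩ := Module.projective_lifting_property g.hom
        (ModuleCat.CoextendScalars.equiv f Y y) hg
      refine ⟨(ModuleCat.CoextendScalars.equiv f X).symm h, ?_⟩
      apply (ModuleCat.CoextendScalars.equiv f Y).injective
      exact hh
    exact (ModuleCat.restrictCoextendScalarsAdj.{u} f).map_projective P hP

/-- Let `f : B →+* A` be a ring homomorphism such that `A` is projective as a left `B`-module
and faithfully flat as a right `B`-module (via `f`).  Let `n : ℕ` and suppose that every left
`B`-module of finite projective dimension has projective dimension at most `n`.  If `M` is a
left `B`-module with `pd_B M = n`, then `pd_B (A ⊗_B M) = n` (as a left `B`-module by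
restriction of scalars) and `pd_A (A ⊗_B M) = n`.

The extension-of-scalars functor `A ⊗_B -` is encoded as a functor
`E : ModuleCat B ⥤ ModuleCat A` that is left adjoint to restriction of scalars along `f`
(any such left adjoint is naturally isomorphic to `A ⊗_B -`).  Being a left adjoint, `E` is
automatically right exact, so faithful flatness of `A` as a right `B`-module is exactly the
statement that `E` preserves monomorphisms (flatness) and sends no nonzero module to zero. -/
theorem projDim_extendScalars_eq_of_sup (B A : Type u) [Ring B] [Ring A] (f : B →+* A)
    (hAproj : Module.Projective B ((ModuleCat.restrictScalars f).obj (ModuleCat.of A A)))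
    (E : ModuleCat.{u} B ⥤ ModuleCat.{u} A) (adj : E ⊣ ModuleCat.restrictScalars f)
    (hflat : E.PreservesMonomorphisms)
    (hfaithful : ∀ X : ModuleCat.{u} B, Limits.IsZero (E.obj X) → Limits.IsZero X)
    (n : ℕ)
    (hbound : ∀ N : ModuleCat.{u} B, projDim N ≠ ⊤ → projDim N ≤ (n : ℕ∞))
    (M : ModuleCat.{u} B) (hM : projDim M = (n : ℕ∞)) :
    projDim ((ModuleCat.restrictScalars f).obj (E.obj M)) = (n : ℕ∞) ∧
      projDim (E.obj M) = (n : ℕ∞) := by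
  have hRp := restrict_preservesProj B A f hAproj
  have hEadd : E.Additive := adj.left_adjoint_additive
  have hEcol : PreservesColimitsOfSize.{0, 0} E := adj.leftAdjoint_preservesColimits
  have hEh : E.PreservesHomology := E.preservesHomology_of_preservesMonos_and_cokernels
  have hEp : E.PreservesProjectiveObjects := ⟨fun {P} hP => adj.map_projective P hP⟩
  have hRh : (ModuleCat.restrictScalars.{u} f).PreservesHomology :=
    have : PreservesLimitsOfSize.{0, 0} (ModuleCat.restrictScalars.{u} f) :=
      adj.rightAdjoint_preservesLimits
    Functor.preservesHomology_of_preservesEpis_and_kernels _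
  have h1 : projDim (E.obj M) ≤ n := hM ▸ projDim_map_le E M
  have h2 : projDim ((ModuleCat.restrictScalars f).obj (E.obj M)) ≤ projDim (E.obj M) :=
    projDim_map_le _ _
  suffices h3 : (n : ℕ∞) ≤ projDim ((ModuleCat.restrictScalars f).obj (E.obj M)) from
    ⟨le_antisymm (h2.trans h1) h3, le_antisymm h1 (h3.trans h2)⟩
  -- the unit is a monomorphism
  have hmono : Mono (adj.unit.app M) := by
    have hk : IsZero (kernel (adj.unit.app M)) := by
      apply hfaithful
      have : Mono (E.map (adj.unit.app M)) :=
        mono_of_mono_fac (adj.left_triangle_components M)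
      have h0 : E.map (kernel.ι (adj.unit.app M)) = 0 := by
        rw [← cancel_mono (E.map (adj.unit.app M)), ← E.map_comp, kernel.condition]
        simp
      have : Mono (E.map (kernel.ι (adj.unit.app M))) := inferInstance
      rw [h0] at this
      exact IsZero.of_mono_zero _ (E.obj M)
    exact Preadditive.mono_of_kernel_zero (hk.eq_of_src _ _)
  let S : ShortComplex (ModuleCat.{u} B) :=
    ShortComplex.mk (adj.unit.app M) (cokernel.π (adj.unit.app M)) (by simp)
  have hS : S.ShortExact :=
    { exact := ShortComplex.exact_of_g_is_cokernel _ (cokernelIsCokernel _)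
      mono_f := hmono
      epi_g := inferInstanceAs (Epi (cokernel.π _)) }
  have d1 : HasProjectiveDimensionLE S.X₁ n := (projDim_le_iff M n).1 hM.le
  have d2 : HasProjectiveDimensionLE S.X₂ n := (projDim_le_iff _ n).1 (h2.trans h1)
  have d3 : HasProjectiveDimensionLE S.X₃ (n + 1) :=
    hS.hasProjectiveDimensionLT_X₃ (n + 1) d1 (hasProjectiveDimensionLT_of_ge _ (n + 1) _ (by omega))
  have d3' : HasProjectiveDimensionLE S.X₃ n := by
    rw [← projDim_le_iff] at d3 ⊢
    exact hbound _ (ne_top_of_le_ne_top (ENat.natCast_ne_top _) d3)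
  by_contra hlt
  rw [not_le] at hlt
  obtain _ | m := n
  · simp at hlt
  · have e2 : HasProjectiveDimensionLE S.X₂ m :=
      (projDim_le_iff _ m).1 (Order.le_of_lt_add_one (by exact_mod_cast hlt))
    have e1 : HasProjectiveDimensionLE S.X₁ m := hS.hasProjectiveDimensionLT_X₁ (m + 1) e2 d3'
    have := (projDim_le_iff M m).2 e1
    rw [hM] at this
    have := (ENat.natCast_le_natCast).1 this
    omega
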